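/- Let q ≥ 2, n ≥ 2, gcd(d,q) = 1, let o_n = (O,0^n) be the generalized prefer-opposite sequence, and let β be coprime to q. Then in the sequence D_β(o_n), every (n−1)-word over A occurs exactly q times as a contiguous window, except the all-zero word 0^{n−1}, which occurs exactly once (at the beginning). -/

import Mathlib

/-!
Write `m = n - 1`. View the greedy sequence as a walk in the de Bruijn graph whose vertices are the
`m`-words and whose edges are the `n`-words; it starts at `0^m` with the loop `0^n` and never uses
an edge twice. The core of the proof is that the edges used by `o_n` are exactly `0^n` and all
nonconstant `n`-words (`Inv.mem_wins`).

* A loop `c^n` with `c ≠ 0` is never used: it is the last choice at `c^m`, so before its use all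
  `q - 1` other edges out of `c^m` are used, and being at `c^m` then requires `q` nonloop edges into
  it (`Inv.step`).
* The walk halts with all edges out of its last vertex used, so by flow balance it halts at `0^m`,
  with all edges into and out of `0^m` used (`Inv.lastN_eq`, `Inv.zero_in`). From then on, in- and
  out-degrees agree at every vertex.
* Suppose a nonconstant `n`-word with last digit `c` is unused. An unused edge into a vertex gives
  an unused edge out of it, and hence the least preferred one, which repeats the last digit, is
  unused. Repeating this leads to an unused nonloop edge into `c^m` (`Inv.reach_const`). For
  `c ≠ 0`, counting the nonloop edges at `c^m` shows that the next to last choice `c^m (c - d)` is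
  unused, so the same holds for the digit `c - d` (`Inv.const_descend`). As `d` generates the
  integers modulo `q`, the digit `0` is reached, contradicting that all edges into `0^m` are used.

Finally, windows of `D_β(o_n)` of length `m` are the images of the windows of `o_n` of length `n`
(`windowCount_Dmap`), each `m`-word has exactly `q` preimages, one for each first digit
(`Dmap_eq_iff_exists`), and the preimages of `0^m` are the constant words, of which only `0^n` is a
window of `o_n`.
-/

namespace PaperDB

/-- The last `s` entries of `l`. -/
def lastN {α : Type*} (s : ℕ) (l : List α) : List α := l.drop (l.length - s)

/-- The digit appended by the greedy rule, if any: the most preferred digit `c`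
(according to the preference function `P`, evaluated at the last `s` digits,
`P x 0` being the most preferred digit) such that the `n`-window created by
appending `c` has not yet occurred as a contiguous subword. -/
def nextDigit (q s n : ℕ) (P : List (ZMod q) → Fin q → ZMod q)
    (l : List (ZMod q)) : Option (ZMod q) :=
  ((List.finRange q).map (fun i => P (lastN s l) i)).find?
    (fun c => !decide ((lastN (n - 1) l ++ [c]) <:+: l))

/-- Fuel-bounded greedy extension. -/
def greedyAux (q s n : ℕ) (P : List (ZMod q) → Fin q → ZMod q) :
    ℕ → List (ZMod q) → List (ZMod q)
  | 0, l => l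
  | f + 1, l =>
    match nextDigit q s n P l with
    | none => l
    | some c => greedyAux q s n P f (l ++ [c])

/-- The greedy sequence `(P, I)`: fuel `q ^ n` provably suffices for the
construction to halt, since every `n`-word occurs at most once. -/
def greedy (q s n : ℕ) (P : List (ZMod q) → Fin q → ZMod q)
    (I : List (ZMod q)) : List (ZMod q) :=
  greedyAux q s n P (q ^ n) I

/-- The number of occurrences of `w` as a length-`n` contiguous window of `l`. -/
def windowCount (q n : ℕ) (w l : List (ZMod q)) : ℕ :=
  ((List.range (l.length + 1 - n)).filter
    (fun i => decide ((l.drop i).take n = w))).length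

/-- `P` is a preference function (of span `s`): it assigns to every `s`-word a
permutation of the alphabet `ZMod q`. -/
def IsPrefFun (q s : ℕ) (P : List (ZMod q) → Fin q → ZMod q) : Prop :=
  ∀ x : List (ZMod q), x.length = s → Function.Bijective (P x)

/-- The generalized prefer-opposite preference function `O^{(q,d)}`, of span 1:
`O_j(a) = a + j·d (mod q)` for `j = 1,…,q`; the `Fin q`-index `j` denotes column `j+1`. -/
def OprefL (q d : ℕ) : List (ZMod q) → Fin q → ZMod q :=
  fun x j => x.headI + (((j : ℕ) + 1 : ℕ) : ZMod q) * (d : ZMod q)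

/-- The generalized prefer-opposite sequence `o_n = (O, 0^n)`. -/
def oSeq (q n d : ℕ) : List (ZMod q) :=
  greedy q 1 n (OprefL q d) (List.replicate n 0)

/-- The generalized Lempel homomorphism `D_β`: it sends `(x_0,…,x_{L-1})` to
`(β(x_1-x_0), …, β(x_{L-1}-x_{L-2}))`, arithmetic modulo `q`. -/
def Dmap (q : ℕ) (β : ZMod q) (l : List (ZMod q)) : List (ZMod q) :=
  List.zipWith (fun x y => β * (y - x)) l l.tail

/-! ### Windows of a list -/

/-- The list of all contiguous windows of length `n` of `l`, from left to right. -/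
def wins {α : Type*} (n : ℕ) (l : List α) : List (List α) :=
  (List.range (l.length + 1 - n)).map (fun i => (l.drop i).take n)

lemma length_of_mem_wins {α : Type*} {n : ℕ} {l w : List α} (h : w ∈ wins n l) :
    w.length = n := by
  simp only [wins, List.mem_map, List.mem_range] at h
  obtain ⟨i, hi, rfl⟩ := h
  simp only [List.length_take, List.length_drop]
  omega

lemma mem_wins_iff {α : Type*} {n : ℕ} {l w : List α} (hw : w.length = n) :
    w ∈ wins n l ↔ w <:+: l := by
  simp only [wins, List.mem_map, List.mem_range]
  constructor
  · rintro ⟨i, -, rfl⟩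
    exact (List.take_prefix _ _).isInfix.trans (List.drop_suffix _ _).isInfix
  · rintro ⟨s, t, rfl⟩
    refine ⟨s.length, ?_, ?_⟩
    · simp only [List.length_append]
      omega
    · simp [← hw]

lemma wins_snoc {α : Type*} {m : ℕ} {l : List α} (c : α) (hl : m ≤ l.length) :
    wins (m + 1) (l ++ [c]) = wins (m + 1) l ++ [lastN m l ++ [c]] := by
  have h1 : (l ++ [c]).length + 1 - (m + 1) = (l.length + 1 - (m + 1)) + 1 := by
    simp only [List.length_append, List.length_singleton]
    omega
  unfold wins
  rw [h1, List.range_succ, List.map_append]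
  congr 1
  · apply List.map_congr_left
    intro i hi
    rw [List.mem_range] at hi
    rw [List.drop_append_of_le_length (by omega), List.take_append_of_le_length]
    simp only [List.length_drop]
    omega
  · simp only [List.map_cons, List.map_nil, lastN]
    rw [List.drop_append_of_le_length (by omega), List.take_of_length_le]
    · simp
    · simp only [List.length_append, List.length_drop, List.length_singleton]
      omega

lemma length_lastN {α : Type*} {m : ℕ} {l : List α} (hl : m ≤ l.length) :
    (lastN m l).length = m := by
  simp only [lastN, List.length_drop]
  omega

lemma lastN_snoc {α : Type*} {m : ℕ} {l : List α} (c : α) (hl : m ≤ l.length) (hm : 1 ≤ m) :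
    lastN m (l ++ [c]) = (lastN m l ++ [c]).tail := by
  unfold lastN
  rw [← List.drop_one, ← List.drop_append_of_le_length (by omega), List.drop_drop]
  congr 1
  simp only [List.length_append, List.length_singleton]
  omega

/-- Pairwise distinct windows are bounded in number by the count `q ^ n` of all words. -/
lemma length_wins_le {q n : ℕ} [NeZero q] {l : List (ZMod q)} (h : (wins n l).Nodup) :
    (wins n l).length ≤ q ^ n := by
  rw [← List.toFinset_card_of_nodup h]
  calc (wins n l).toFinset.card
      ≤ ((Finset.univ : Finset (List.Vector (ZMod q) n)).image
          List.Vector.toList).card := by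
        apply Finset.card_le_card
        intro w hw
        rw [List.mem_toFinset] at hw
        exact Finset.mem_image.2 ⟨⟨w, length_of_mem_wins hw⟩, Finset.mem_univ _, rfl⟩
    _ ≤ (Finset.univ : Finset (List.Vector (ZMod q) n)).card := Finset.card_image_le
    _ = q ^ n := by rw [Finset.card_univ, card_vector, ZMod.card]

/-! ### The preference function -/

lemma pref_bijective {q d : ℕ} [NeZero q] (hd : Nat.Coprime d q) (a : ZMod q) :
    Function.Bijective (fun j : Fin q => a + (((j : ℕ) + 1 : ℕ) : ZMod q) * (d : ZMod q)) := by
  rw [Fintype.bijective_iff_injective_and_card]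
  refine ⟨?_, by simp [ZMod.card]⟩
  intro i j hij
  have hu : IsUnit (d : ZMod q) := (ZMod.isUnit_iff_coprime d q).2 hd
  have h2 := hu.mul_right_cancel (add_left_cancel hij)
  push_cast at h2
  have h3 := add_right_cancel h2
  rw [ZMod.natCast_eq_natCast_iff', Nat.mod_eq_of_lt i.2, Nat.mod_eq_of_lt j.2] at h3
  exact Fin.ext h3

lemma pref_inj {q d : ℕ} [NeZero q] (hd : Nat.Coprime d q) {a : ZMod q} {i j : ℕ} (hi : i < q)
    (hj : j < q) (h : a + ((i + 1 : ℕ) : ZMod q) * d = a + ((j + 1 : ℕ) : ZMod q) * d) :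
    i = j := by
  have := @(pref_bijective hd a).1 ⟨i, hi⟩ ⟨j, hj⟩ h
  simpa using this

lemma pref_surj {q d : ℕ} [NeZero q] (hd : Nat.Coprime d q) (a y : ZMod q) :
    ∃ i < q, y = a + ((i + 1 : ℕ) : ZMod q) * d := by
  obtain ⟨i, hi⟩ := (pref_bijective hd a).2 y
  exact ⟨i, i.2, hi.symm⟩

/-- The least preferred digit is the current digit itself. -/
lemma pref_last {q d : ℕ} [NeZero q] (a : ZMod q) :
    a + ((q - 1 + 1 : ℕ) : ZMod q) * d = a := by
  rw [Nat.sub_add_cancel (NeZero.one_le)]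
  simp

/-- The least preferred digit among those different from the current digit `a` is `a - d`. -/
lemma pref_penultimate {q d : ℕ} (hq : 2 ≤ q) (a : ZMod q) :
    a + ((q - 2 + 1 : ℕ) : ZMod q) * d = a - d := by
  have : q - 2 + 1 = q - 1 := by omega
  rw [this, Nat.cast_sub (by omega)]
  simp
  ring

lemma exists_snoc_of_pos {α : Type*} {v : List α} (h : 1 ≤ v.length) : ∃ v' a, v = v' ++ [a] := by
  rcases List.eq_nil_or_concat' v with rfl | h'
  · simp at h
  · exact h'

lemma lastN_one_of_lastN {α : Type*} {m : ℕ} {l v : List α} {a : α} (hl : m ≤ l.length)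
    (h : lastN m l = v ++ [a]) : lastN 1 l = [a] := by
  have h1 := length_lastN hl
  have h2 : l = l.take (l.length - m) ++ (v ++ [a]) := by
    rw [← h]
    exact (List.take_append_drop _ _).symm
  generalize l.take (l.length - m) = p at h2
  rw [h2, ← List.append_assoc]
  simp [lastN]

lemma nextDigit_some {q m d : ℕ} {l v : List (ZMod q)} {a c : ZMod q} (hl : m ≤ l.length)
    (hv : lastN m l = v ++ [a]) (h : nextDigit q 1 (m + 1) (OprefL q d) l = some c) :
    ¬ (lastN m l ++ [c] <:+: l) ∧ ∃ i < q, c = a + ((i + 1 : ℕ) : ZMod q) * d ∧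
      ∀ j < i, v ++ [a] ++ [a + ((j + 1 : ℕ) : ZMod q) * d] <:+: l := by
  unfold nextDigit at h
  rw [List.find?_eq_some_iff_getElem] at h
  obtain ⟨h1, i, hi, h2, h3⟩ := h
  simp only [Nat.add_sub_cancel, Bool.not_eq_true', decide_eq_false_iff_not] at h1
  have hiq : i < q := by simpa using hi
  refine ⟨h1, i, hiq, ?_, ?_⟩
  · rw [← h2]
    simp [OprefL, lastN_one_of_lastN hl hv]
  · intro j hj
    have := h3 j hj
    simpa [OprefL, lastN_one_of_lastN hl hv, hv] using this

lemma nextDigit_none {q m d : ℕ} [NeZero q] (hd : Nat.Coprime d q) {l v : List (ZMod q)}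
    {a : ZMod q} (hl : m ≤ l.length)
    (hv : lastN m l = v ++ [a]) (h : nextDigit q 1 (m + 1) (OprefL q d) l = none) (c : ZMod q) :
    lastN m l ++ [c] <:+: l := by
  unfold nextDigit at h
  rw [List.find?_eq_none] at h
  obtain ⟨i, hi, rfl⟩ := pref_surj hd a c
  have := h _ (List.mem_map.2 ⟨⟨i, hi⟩, List.mem_finRange _, rfl⟩)
  simpa [OprefL, lastN_one_of_lastN hl hv] using this

/-! ### Invariants of the greedy construction -/

/-- The invariants of the greedy construction `(O, 0^{m+1})`. Words of length `m` are the vertices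
and words of length `m + 1` the edges of the de Bruijn graph; the list `l` is a walk in it. -/
structure Inv (q m d : ℕ) [NeZero q] (l : List (ZMod q)) : Prop where
  start : List.replicate (m + 1) 0 <+: l
  nodup : (wins (m + 1) l).Nodup
  /-- Flow balance at every vertex, corrected at the two ends of the walk. -/
  bal : ∀ v : List (ZMod q),
    ∑ a, (wins (m + 1) l).count (a :: v) + (if v = List.replicate m 0 then 1 else 0) =
      ∑ c, (wins (m + 1) l).count (v ++ [c]) + (if v = lastN m l then 1 else 0)
  /-- Edges out of a vertex other than `0^m` are used in order of preference. -/
  clos : ∀ (v : List (ZMod q)) (a : ZMod q) (i : ℕ), i < q → v ++ [a] ≠ List.replicate m 0 →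
    v ++ [a] ++ [a + ((i + 1 : ℕ) : ZMod q) * d] ∈ wins (m + 1) l →
    ∀ j < i, v ++ [a] ++ [a + ((j + 1 : ℕ) : ZMod q) * d] ∈ wins (m + 1) l
  /-- No loop of the graph is used except the one at `0^m`. -/
  const : ∀ c : ZMod q, c ≠ 0 → List.replicate (m + 1) c ∉ wins (m + 1) l

lemma Inv.le_length {q m d : ℕ} [NeZero q] {l : List (ZMod q)} (h : Inv q m d l) :
    m + 1 ≤ l.length := by
  simpa using h.start.length_le

lemma sum_ite_cons_eq {q : ℕ} [NeZero q] (e v : List (ZMod q)) (he : e ≠ []) :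
    ∑ a : ZMod q, (if e = a :: v then 1 else 0) = if v = e.tail then 1 else 0 := by
  obtain ⟨b, t, rfl⟩ := List.exists_cons_of_ne_nil he
  by_cases h : v = t
  · subst h
    simp
  · simp [h, Ne.symm h]

lemma sum_ite_snoc_eq {q : ℕ} [NeZero q] (u v : List (ZMod q)) (c : ZMod q) :
    ∑ b : ZMod q, (if u ++ [c] = v ++ [b] then 1 else 0) = if v = u then 1 else 0 := by
  by_cases h : v = u
  · subst h
    simp
  · have : ∀ b, u ++ [c] ≠ v ++ [b] := by
      intro b hb
      exact h (List.append_inj' hb rfl).1.symm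
    simp [h, this]

lemma wins_replicate {α : Type*} (n : ℕ) (a : α) :
    wins n (List.replicate n a) = [List.replicate n a] := by
  simp [wins]

lemma Inv.base {q m d : ℕ} [NeZero q] :
    Inv q m d (List.replicate (m + 1) 0) where
  start := List.prefix_rfl
  nodup := by simp [wins_replicate]
  bal v := by
    have h1 : lastN m (List.replicate (m + 1) (0 : ZMod q)) = List.replicate m 0 := by
      simp [lastN]
    have h2 : ∑ a : ZMod q, (if List.replicate (m + 1) 0 = a :: v then 1 else 0)
        = if v = List.replicate m 0 then 1 else 0 := by
      rw [sum_ite_cons_eq _ _ (by simp)]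
      simp
    have h3 : ∑ a : ZMod q, (if List.replicate (m + 1) 0 = v ++ [a] then 1 else 0)
        = if v = List.replicate m 0 then 1 else 0 := by
      rw [List.replicate_succ', sum_ite_snoc_eq]
    simp only [wins_replicate, List.count_singleton, beq_iff_eq]
    rw [h1, h2, h3]
  clos v a i hi hne h := by
    rw [wins_replicate, List.mem_singleton, List.replicate_succ'] at h
    exact absurd (List.append_inj' h rfl).1 hne
  const c hc h := by
    rw [wins_replicate, List.mem_singleton, List.replicate_right_inj (by omega)] at h
    exact hc h

lemma Inv.step {q m d : ℕ} [NeZero q] (hm : 1 ≤ m) (hd : Nat.Coprime d q) {l : List (ZMod q)}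
    (h : Inv q m d l) {c : ZMod q} (hc : nextDigit q 1 (m + 1) (OprefL q d) l = some c) :
    Inv q m d (l ++ [c]) := by
  have hl : m ≤ l.length := by have := h.le_length; omega
  have hul := length_lastN hl
  obtain ⟨v, a, hv⟩ := exists_snoc_of_pos (v := lastN m l) (by omega)
  obtain ⟨hnew, i, hi, hci, hpref⟩ := nextDigit_some hl hv hc
  have hW := wins_snoc c hl
  have hvl : v.length + 1 = m := by simpa [hv] using hul
  have hnewW : lastN m l ++ [c] ∉ wins (m + 1) l := by
    rwa [mem_wins_iff (by simp [hul])]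
  have hprefW : ∀ j < i, v ++ [a] ++ [a + ((j + 1 : ℕ) : ZMod q) * d] ∈ wins (m + 1) l := by
    intro j hj
    rw [mem_wins_iff (by simp; omega)]
    exact hpref j hj
  refine ⟨h.start.trans (List.prefix_append _ _), ?_, ?_, ?_, ?_⟩
  · rw [hW, List.nodup_append]
    refine ⟨h.nodup, List.nodup_singleton _, ?_⟩
    intro x hx y hy hxy
    rw [List.mem_singleton] at hy
    exact hnewW (by rw [← hy, ← hxy]; exact hx)
  · intro w
    have hb := h.bal w
    have h1 := sum_ite_cons_eq (lastN m l ++ [c]) w (by simp)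
    have h2 := sum_ite_snoc_eq (lastN m l) w c
    rw [hW, lastN_snoc c hl hm]
    simp only [List.count_append, List.count_singleton, beq_iff_eq, Finset.sum_add_distrib]
    rw [h1, h2]
    omega
  · intro v' a' i' hi' hne hmem j hj
    rw [hW, List.mem_append, List.mem_singleton] at hmem ⊢
    left
    rcases hmem with hmem | hmem
    · exact h.clos v' a' i' hi' hne hmem j hj
    · rw [hv] at hmem
      obtain ⟨e1, e2⟩ := List.append_inj' hmem rfl
      obtain ⟨rfl, e3⟩ := List.append_inj' e1 rfl
      simp only [List.cons.injEq, and_true] at e2 e3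
      subst e3
      rw [hci] at e2
      obtain rfl := pref_inj hd hi' hi e2
      exact hprefW j hj
  · intro b hb hmem
    rw [hW, List.mem_append, List.mem_singleton] at hmem
    rcases hmem with hmem | hmem
    · exact h.const b hb hmem
    rw [List.replicate_succ'] at hmem
    obtain ⟨e1, e2⟩ := List.append_inj' hmem rfl
    simp only [List.cons.injEq, and_true] at e2
    subst e2
    have hab : a = b := by
      have : a ∈ List.replicate m b := by rw [e1, hv]; simp
      exact List.eq_of_mem_replicate this
    subst hab
    -- The loop is the last choice, so every other edge out of `b^m` has been used.
    have hiq : i = q - 1 := by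
      have hq := NeZero.one_le (n := q)
      refine pref_inj (a := a) hd hi (by omega) ?_
      rw [← hci, pref_last]
    have hout : ∀ y, y ≠ a → List.replicate m a ++ [y] ∈ wins (m + 1) l := by
      intro y hy
      obtain ⟨j, hj, rfl⟩ := pref_surj hd a y
      rw [e1, hv]
      apply hprefW
      have : j ≠ q - 1 := by
        rintro rfl
        exact hy (pref_last a)
      omega
    have hb' := h.bal (List.replicate m a)
    have hne : List.replicate m a ≠ List.replicate m 0 := by
      rw [Ne, List.replicate_right_inj (by omega)]
      exact hb
    rw [if_neg hne, if_pos e1] at hb'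
    have h1 : ∑ x, (wins (m + 1) l).count (x :: List.replicate m a) ≤
        ∑ y, (wins (m + 1) l).count (List.replicate m a ++ [y]) := by
      apply Finset.sum_le_sum
      intro x _
      by_cases hx : x = a
      · subst hx
        rw [← List.replicate_succ, List.count_eq_zero_of_not_mem (h.const x hb)]
        exact Nat.zero_le _
      · have h2 := List.nodup_iff_count_le_one.1 h.nodup (x :: List.replicate m a)
        have h3 := List.count_pos_iff.2 (hout x hx)
        omega
    omega

lemma greedyAux_spec {q m d : ℕ} [NeZero q] (hm : 1 ≤ m) (hd : Nat.Coprime d q) :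
    ∀ (f : ℕ) (l : List (ZMod q)), Inv q m d l →
      Inv q m d (greedyAux q 1 (m + 1) (OprefL q d) f l) ∧
      (nextDigit q 1 (m + 1) (OprefL q d) (greedyAux q 1 (m + 1) (OprefL q d) f l) = none ∨
        (greedyAux q 1 (m + 1) (OprefL q d) f l).length = l.length + f) := by
  intro f
  induction f with
  | zero => intro l hl; exact ⟨hl, Or.inr rfl⟩
  | succ f ih =>
    intro l hl
    rw [greedyAux]
    cases hc : nextDigit q 1 (m + 1) (OprefL q d) l with
    | none => exact ⟨hl, Or.inl hc⟩
    | some c =>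
      obtain ⟨h1, h2⟩ := ih _ (hl.step hm hd hc)
      refine ⟨h1, h2.imp_right ?_⟩
      intro h3
      simp only
      rw [h3]
      simp
      omega

/-- The fuel `q ^ (m + 1)` exceeds the number of edges still available, so the construction of
`o_{m+1}` ends because no digit can be appended. -/
lemma oSeq_spec {q m d : ℕ} [NeZero q] (hm : 1 ≤ m) (hd : Nat.Coprime d q) :
    Inv q m d (oSeq q (m + 1) d) ∧
      nextDigit q 1 (m + 1) (OprefL q d) (oSeq q (m + 1) d) = none := by
  obtain ⟨h1, h2⟩ := greedyAux_spec hm hd (q ^ (m + 1)) _ (Inv.base (d := d))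
  refine ⟨h1, h2.resolve_right ?_⟩
  intro h3
  have h4 := length_wins_le h1.nodup
  simp only [wins, List.length_map, List.length_range, List.length_replicate] at h3 h4
  omega

/-! ### The halted walk -/

section Halted

variable {q m d : ℕ} [NeZero q] {l : List (ZMod q)}

lemma Inv.sum_in_le (h : Inv q m d l) (v : List (ZMod q)) :
    ∑ a, (wins (m + 1) l).count (a :: v) ≤ q := by
  calc ∑ a, (wins (m + 1) l).count (a :: v) ≤ ∑ _a : ZMod q, 1 :=
        Finset.sum_le_sum fun a _ => List.nodup_iff_count_le_one.1 h.nodup _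
    _ = q := by simp [ZMod.card]

lemma sum_out_ge {v : List (ZMod q)} (h : ∀ c, v ++ [c] ∈ wins (m + 1) l) :
    q ≤ ∑ c, (wins (m + 1) l).count (v ++ [c]) := by
  calc q = ∑ _a : ZMod q, 1 := by simp [ZMod.card]
    _ ≤ _ := Finset.sum_le_sum fun c _ => List.count_pos_iff.2 (h c)

/-- By flow balance a walk can only halt at its starting vertex. -/
lemma Inv.lastN_eq (hm : 1 ≤ m) (hd : Nat.Coprime d q) (h : Inv q m d l)
    (hh : nextDigit q 1 (m + 1) (OprefL q d) l = none) : lastN m l = List.replicate m 0 := by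
  have hl : m ≤ l.length := by have := h.le_length; omega
  have hul := length_lastN hl
  obtain ⟨v, a, hv⟩ := exists_snoc_of_pos (v := lastN m l) (by omega)
  have hout : ∀ c, lastN m l ++ [c] ∈ wins (m + 1) l := by
    intro c
    rw [mem_wins_iff (by simp [hul])]
    exact nextDigit_none hd hl hv hh c
  by_contra hne
  have hb := h.bal (lastN m l)
  rw [if_neg hne, if_pos rfl] at hb
  have h1 := h.sum_in_le (lastN m l)
  have h2 := sum_out_ge hout
  omega

lemma Inv.bal_halted (hm : 1 ≤ m) (hd : Nat.Coprime d q) (h : Inv q m d l)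
    (hh : nextDigit q 1 (m + 1) (OprefL q d) l = none) (v : List (ZMod q)) :
    ∑ a, (wins (m + 1) l).count (a :: v) = ∑ c, (wins (m + 1) l).count (v ++ [c]) := by
  have hb := h.bal v
  rw [h.lastN_eq hm hd hh] at hb
  omega

/-- If some edge into `v` is unused, then so is some edge out of `v`. -/
lemma Inv.exists_out (hm : 1 ≤ m) (hd : Nat.Coprime d q) (h : Inv q m d l)
    (hh : nextDigit q 1 (m + 1) (OprefL q d) l = none) {v : List (ZMod q)} {a : ZMod q}
    (ha : a :: v ∉ wins (m + 1) l) : ∃ c, v ++ [c] ∉ wins (m + 1) l := by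
  by_contra! hcon
  have hb := h.bal_halted hm hd hh v
  have h1 := sum_out_ge hcon
  have h2 : ∑ a, (wins (m + 1) l).count (a :: v) < ∑ _a : ZMod q, 1 := by
    apply Finset.sum_lt_sum
    · exact fun a _ => List.nodup_iff_count_le_one.1 h.nodup _
    · exact ⟨a, Finset.mem_univ _, by rw [List.count_eq_zero_of_not_mem ha]; exact one_pos⟩
  simp only [Finset.sum_const, Finset.card_univ, ZMod.card, smul_eq_mul, mul_one] at h2
  omega

lemma Inv.zero_in (hm : 1 ≤ m) (hd : Nat.Coprime d q) (h : Inv q m d l)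
    (hh : nextDigit q 1 (m + 1) (OprefL q d) l = none) (a : ZMod q) :
    a :: List.replicate m 0 ∈ wins (m + 1) l := by
  by_contra hcon
  obtain ⟨c, hc⟩ := h.exists_out hm hd hh hcon
  have hl : m ≤ l.length := by have := h.le_length; omega
  have hul := length_lastN hl
  obtain ⟨v, b, hv⟩ := exists_snoc_of_pos (v := lastN m l) (by omega)
  apply hc
  rw [mem_wins_iff (by simp), ← h.lastN_eq hm hd hh]
  exact nextDigit_none hd hl hv hh c

/-- An unused edge into a nonzero vertex forces its least preferred outgoing edge to be unused. -/
lemma Inv.last_out (hm : 1 ≤ m) (hd : Nat.Coprime d q) (h : Inv q m d l)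
    (hh : nextDigit q 1 (m + 1) (OprefL q d) l = none) {v : List (ZMod q)} {a b : ZMod q}
    (hne : v ++ [b] ≠ List.replicate m 0)
    (ha : a :: (v ++ [b]) ∉ wins (m + 1) l) : v ++ [b] ++ [b] ∉ wins (m + 1) l := by
  obtain ⟨c, hc⟩ := h.exists_out hm hd hh ha
  obtain ⟨i, hi, rfl⟩ := pref_surj hd b c
  intro hmem
  have hq := NeZero.one_le (n := q)
  by_cases hiq : i = q - 1
  · subst hiq
    rw [pref_last] at hc
    exact hc hmem
  · apply hc
    refine h.clos v b (q - 1) (by omega) hne ?_ i (by omega)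
    rwa [pref_last]

/-- Following least preferred edges from an unused edge whose last digit is `c`, one arrives at an
unused edge, other than the loop, into the constant vertex `c^m`. -/
lemma Inv.reach_const (hm : 1 ≤ m) (hd : Nat.Coprime d q) (h : Inv q m d l)
    (hh : nextDigit q 1 (m + 1) (OprefL q d) l = none) {x c : ZMod q} (hxc : x ≠ c) :
    ∀ (y : List (ZMod q)) (k : ℕ), (y ++ [x] ++ List.replicate (k + 1) c).length = m + 1 →
      y ++ [x] ++ List.replicate (k + 1) c ∉ wins (m + 1) l →
      ∃ x', x' ≠ c ∧ x' :: List.replicate m c ∉ wins (m + 1) l := by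
  intro y
  induction y with
  | nil =>
    intro k hk hw
    have : k + 1 = m := by simpa using hk
    rw [this] at hw
    exact ⟨x, hxc, by simpa using hw⟩
  | cons a y ih =>
    intro k hk hw
    apply ih (k + 1)
    · simp only [List.length_append, List.length_cons, List.length_replicate] at hk ⊢
      omega
    · have e : y ++ [x] ++ List.replicate (k + 1 + 1) c
          = (y ++ [x] ++ List.replicate k c) ++ [c] ++ [c] := by
        rw [List.replicate_succ', List.replicate_succ']
        simp only [List.append_assoc]
      rw [e]
      apply h.last_out hm hd hh (a := a)
      · intro h0
        have hx : x ∈ List.replicate m (0 : ZMod q) := by rw [← h0]; simp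
        have hc : c ∈ List.replicate m (0 : ZMod q) := by rw [← h0]; simp
        exact hxc ((List.eq_of_mem_replicate hx).trans (List.eq_of_mem_replicate hc).symm)
      · rw [List.replicate_succ'] at hw
        simpa only [List.append_assoc, List.cons_append] using hw

/-- An unused edge, other than the loop, into `c^m` yields one into `(c - d)^m`. -/
lemma Inv.const_descend (hq : 2 ≤ q) (hm : 1 ≤ m) (hd : Nat.Coprime d q) (h : Inv q m d l)
    (hh : nextDigit q 1 (m + 1) (OprefL q d) l = none) {c : ZMod q}
    (hc : ∃ x, x ≠ c ∧ x :: List.replicate m c ∉ wins (m + 1) l) :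
    ∃ x, x ≠ c - d ∧ x :: List.replicate m (c - d) ∉ wins (m + 1) l := by
  obtain ⟨x, hxc, hx⟩ := hc
  have hc0 : c ≠ 0 := by
    rintro rfl
    exact hx (h.zero_in hm hd hh x)
  obtain ⟨k, rfl⟩ : ∃ k, m = k + 1 := ⟨m - 1, by omega⟩
  have hne : List.replicate k c ++ [c] ≠ List.replicate (k + 1) 0 := by
    rw [← List.replicate_succ', Ne, List.replicate_right_inj (by omega)]
    exact hc0
  -- Counting nonloop edges at `c^m`: one ingoing edge is unused, hence so is one outgoing edge.
  have hy : ∃ y, y ≠ c ∧ List.replicate (k + 1) c ++ [y] ∉ wins (k + 1 + 1) l := by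
    by_contra! hcon
    have hb := h.bal_halted hm hd hh (List.replicate (k + 1) c)
    refine absurd hb (ne_of_lt ?_)
    apply Finset.sum_lt_sum
    · intro z _
      by_cases hz : z = c
      · subst hz
        rw [← List.replicate_succ, List.count_eq_zero_of_not_mem (h.const z hc0)]
        exact Nat.zero_le _
      · have h2 := List.nodup_iff_count_le_one.1 h.nodup (z :: List.replicate (k + 1) c)
        have h3 := List.count_pos_iff.2 (hcon z hz)
        omega
    · refine ⟨x, Finset.mem_univ _, ?_⟩
      rw [List.count_eq_zero_of_not_mem hx]
      exact List.count_pos_iff.2 (hcon x hxc)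
  obtain ⟨y, hyc, hy⟩ := hy
  have hpen : List.replicate k c ++ [c] ++ [c - d] ∉ wins (k + 1 + 1) l := by
    obtain ⟨i, hi, rfl⟩ := pref_surj hd c y
    intro hmem
    have hi1 : i ≠ q - 1 := by
      rintro rfl
      exact hyc (pref_last c)
    rw [List.replicate_succ'] at hy
    by_cases hi2 : i = q - 2
    · subst hi2
      rw [pref_penultimate hq] at hy
      exact hy hmem
    · apply hy
      refine h.clos _ c (q - 2) (by omega) hne ?_ i (by omega)
      rwa [pref_penultimate hq]
  have hdne : c ≠ c - d := by
    intro hcd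
    have hd0 : (d : ZMod q) = 0 := sub_eq_self.1 hcd.symm
    have hu : IsUnit (d : ZMod q) := (ZMod.isUnit_iff_coprime d q).2 hd
    have : Nontrivial (ZMod q) := ZMod.nontrivial_iff.2 (by omega)
    exact hu.ne_zero hd0
  exact h.reach_const hm hd hh hdne (List.replicate k c) 0 (by simp) (by simpa using hpen)

lemma Inv.const_in (hq : 2 ≤ q) (hm : 1 ≤ m) (hd : Nat.Coprime d q) (h : Inv q m d l)
    (hh : nextDigit q 1 (m + 1) (OprefL q d) l = none) (c : ZMod q) :
    ¬ ∃ x, x ≠ c ∧ x :: List.replicate m c ∉ wins (m + 1) l := by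
  intro hc
  have key : ∀ t : ℕ, ∃ x, x ≠ c - t * d ∧
      x :: List.replicate m (c - t * d) ∉ wins (m + 1) l := by
    intro t
    induction t with
    | zero => simpa using hc
    | succ t ih =>
      have e : c - ((t + 1 : ℕ) : ZMod q) * d = c - t * d - d := by push_cast; ring
      rw [e]
      exact h.const_descend hq hm hd hh ih
  obtain ⟨i, -, hi⟩ := pref_surj hd 0 c
  obtain ⟨x, -, hx⟩ := key (i + 1)
  have e : c - ((i + 1 : ℕ) : ZMod q) * d = 0 := by rw [hi]; ring
  rw [e] at hx
  exact hx (h.zero_in hm hd hh x)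

/-- A word is constant, or its last run of equal digits is preceded by a different digit. -/
lemma const_or_decomp {α : Type*} [Inhabited α] (w : List α) :
    (∃ c, w = List.replicate w.length c) ∨
      ∃ y x c k, x ≠ c ∧ w = y ++ [x] ++ List.replicate (k + 1) c := by
  induction w with
  | nil => exact Or.inl ⟨default, rfl⟩
  | cons a t ih =>
    rcases ih with ⟨c, hc⟩ | ⟨y, x, c, k, hxc, rfl⟩
    · by_cases hac : a = c
      · left
        refine ⟨c, ?_⟩
        rw [List.length_cons, List.replicate_succ, ← hc, hac]
      · rcases Nat.eq_zero_or_pos t.length with h0 | h0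
        · left
          rw [List.length_eq_zero_iff] at h0
          subst h0
          exact ⟨a, rfl⟩
        · right
          refine ⟨[], a, c, t.length - 1, hac, ?_⟩
          rw [Nat.sub_add_cancel h0, ← hc]
          rfl
    · right
      exact ⟨a :: y, x, c, k, hxc, rfl⟩

/-- The windows of the halted sequence are `0^{m+1}` and all nonconstant words. -/
lemma Inv.mem_wins (hq : 2 ≤ q) (hm : 1 ≤ m) (hd : Nat.Coprime d q) (h : Inv q m d l)
    (hh : nextDigit q 1 (m + 1) (OprefL q d) l = none) {w : List (ZMod q)}
    (hw : w.length = m + 1) :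
    w ∈ wins (m + 1) l ↔ ∀ c, c ≠ 0 → w ≠ List.replicate (m + 1) c := by
  constructor
  · rintro hmem c hc rfl
    exact h.const c hc hmem
  · intro hc
    rcases const_or_decomp w with ⟨c, hwc⟩ | ⟨y, x, c, k, hxc, rfl⟩
    · rw [hw] at hwc
      by_cases hc0 : c = 0
      · rw [hwc, hc0]
        exact h.zero_in hm hd hh 0
      · exact absurd hwc (hc c hc0)
    · by_contra hcon
      exact h.const_in hq hm hd hh c (h.reach_const hm hd hh hxc y k hw hcon)

end Halted

/-! ### The difference map -/

lemma Dmap_cons_cons {q : ℕ} (β a b : ZMod q) (t : List (ZMod q)) :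
    Dmap q β (a :: b :: t) = β * (b - a) :: Dmap q β (b :: t) := rfl

lemma take_Dmap {q : ℕ} (β : ZMod q) (m : ℕ) (l : List (ZMod q)) :
    (Dmap q β l).take m = Dmap q β (l.take (m + 1)) := by
  induction m generalizing l with
  | zero => cases l <;> simp [Dmap]
  | succ m ih =>
    match l with
    | [] => simp [Dmap]
    | [a] => simp [Dmap]
    | a :: b :: t =>
      rw [Dmap_cons_cons, List.take_succ_cons, ih]
      rfl

lemma drop_Dmap {q : ℕ} (β : ZMod q) (i : ℕ) (l : List (ZMod q)) :
    (Dmap q β l).drop i = Dmap q β (l.drop i) := by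
  simp [Dmap, List.drop_zipWith]

lemma length_Dmap {q : ℕ} (β : ZMod q) (l : List (ZMod q)) :
    (Dmap q β l).length = l.length - 1 := by
  simp [Dmap]

lemma Dmap_replicate {q : ℕ} (β : ZMod q) (m : ℕ) (c : ZMod q) :
    Dmap q β (List.replicate (m + 1) c) = List.replicate m 0 := by
  simp [Dmap]

/-- Discrete integration: for `γ = β⁻¹`, the word with first digit `a` whose image under `D_β` is
the given word. -/
def integ {q : ℕ} (γ : ZMod q) : ZMod q → List (ZMod q) → List (ZMod q)
  | a, [] => [a]
  | a, y :: t => a :: integ γ (a + γ * y) t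

lemma length_integ {q : ℕ} (γ a : ZMod q) (w : List (ZMod q)) :
    (integ γ a w).length = w.length + 1 := by
  induction w generalizing a with
  | nil => rfl
  | cons y t ih => simp [integ, ih]

lemma integ_injective {q : ℕ} (γ : ZMod q) (w : List (ZMod q)) :
    Function.Injective (fun a => integ γ a w) := by
  intro a b h
  cases w with
  | nil => simpa [integ] using h
  | cons y t =>
    simp only [integ, List.cons.injEq] at h
    exact h.1

lemma Dmap_eq_iff {q : ℕ} {β γ : ZMod q} (h : β * γ = 1) (a : ZMod q) (t w : List (ZMod q)) :
    Dmap q β (a :: t) = w ↔ a :: t = integ γ a w := by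
  induction t generalizing a w with
  | nil =>
    cases w with
    | nil => simp [Dmap, integ]
    | cons y w =>
      cases w <;> simp [Dmap, integ]
  | cons b t ih =>
    rw [Dmap_cons_cons]
    cases w with
    | nil => simp [integ]
    | cons y w =>
      have hb : β * (b - a) = y ↔ b = a + γ * y := by
        constructor
        · rintro rfl
          linear_combination (-(b - a)) * h
        · rintro rfl
          linear_combination y * h
      simp only [List.cons.injEq, integ, true_and, hb, ih]
      constructor
      · rintro ⟨rfl, h2⟩
        exact h2
      · intro h2
        have : b = a + γ * y := by
          cases w <;> simp only [integ, List.cons.injEq] at h2 <;> exact h2.1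
        exact ⟨this, this ▸ h2⟩

lemma Dmap_eq_iff_exists {q : ℕ} {β γ : ZMod q} (h : β * γ = 1) {x : List (ZMod q)}
    (hx : x ≠ []) (w : List (ZMod q)) : Dmap q β x = w ↔ ∃ a, x = integ γ a w := by
  obtain ⟨b, t, rfl⟩ := List.exists_cons_of_ne_nil hx
  rw [Dmap_eq_iff h]
  constructor
  · exact fun h => ⟨b, h⟩
  · rintro ⟨a, ha⟩
    have : b = a := by
      cases w <;> simp only [integ, List.cons.injEq] at ha <;> exact ha.1
    rw [this] at ha ⊢
    exact ha

/-- The occurrences of `w` in `D_β(l)` are the windows of `l` that `D_β` sends to `w`. -/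
lemma windowCount_Dmap {q m : ℕ} (β : ZMod q) {l : List (ZMod q)} (hl : 1 ≤ l.length)
    (w : List (ZMod q)) :
    windowCount q m w (Dmap q β l) =
      ((wins (m + 1) l).filter (fun x => decide (Dmap q β x = w))).length := by
  have e : (Dmap q β l).length + 1 - m = l.length + 1 - (m + 1) := by
    rw [length_Dmap]
    omega
  unfold windowCount wins
  rw [List.filter_map, List.length_map, e]
  simp only [drop_Dmap, take_Dmap, Function.comp_def]

/-- For `β` coprime to `q`, in the sequence `D_β(o_n)`
every `(n-1)`-word occurs exactly `q` times as a contiguous window, except the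
all-zero word `0^{n-1}`, which occurs exactly once — at the beginning. -/
theorem Dmap_oSeq_window_counts (q n d β : ℕ) (hq : 2 ≤ q) (hn : 2 ≤ n)
    (hd : Nat.Coprime d q) (hβ : Nat.Coprime β q) :
    (∀ w : List (ZMod q), w.length = n - 1 →
      windowCount q (n - 1) w (Dmap q (β : ZMod q) (oSeq q n d)) =
        if w = List.replicate (n - 1) (0 : ZMod q) then 1 else q) ∧
    List.replicate (n - 1) (0 : ZMod q) <+: Dmap q (β : ZMod q) (oSeq q n d) := by
  have : NeZero q := ⟨by omega⟩
  obtain ⟨m, rfl⟩ : ∃ m, n = m + 1 := ⟨n - 1, by omega⟩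
  have hm : 1 ≤ m := by omega
  rw [Nat.add_sub_cancel]
  obtain ⟨hI, hh⟩ := oSeq_spec (q := q) (d := d) hm hd
  have hlen := hI.le_length
  have hγ : (β : ZMod q) * (β : ZMod q)⁻¹ = 1 := ZMod.coe_mul_inv_eq_one β hβ
  refine ⟨?_, ?_⟩
  · intro w hw
    rw [windowCount_Dmap _ (by omega)]
    have hnd := hI.nodup.filter (fun x => decide (Dmap q β x = w))
    split_ifs with h0
    · subst h0
      refine (List.Perm.length_eq ?_).trans
        (List.length_singleton (a := List.replicate (m + 1) (0 : ZMod q)))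
      rw [List.perm_ext_iff_of_nodup hnd (List.nodup_singleton _)]
      intro x
      simp only [List.mem_filter, decide_eq_true_eq, List.mem_singleton]
      constructor
      · rintro ⟨hx, hD⟩
        have hxl := length_of_mem_wins hx
        have hx0 : x ≠ [] := by rintro rfl; simp at hxl
        rw [Dmap_eq_iff_exists hγ hx0] at hD
        obtain ⟨a, ha⟩ := hD
        have hca := (Dmap_eq_iff hγ a (List.replicate m a) _).1 (Dmap_replicate (β : ZMod q) m a)
        rw [← ha, ← List.replicate_succ] at hca
        by_contra hne
        have ha0 : a ≠ 0 := by
          rintro rfl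
          exact hne hca.symm
        exact hI.const a ha0 (hca ▸ hx)
      · rintro rfl
        exact ⟨hI.zero_in hm hd hh 0, Dmap_replicate _ _ _⟩
    · have hq' : ((Finset.univ : Finset (ZMod q)).toList.map
          (fun a => integ (β : ZMod q)⁻¹ a w)).length = q := by
        simp [ZMod.card]
      refine (List.Perm.length_eq ?_).trans hq'
      rw [List.perm_ext_iff_of_nodup hnd
        ((Finset.nodup_toList _).map (integ_injective _ w))]
      intro x
      simp only [List.mem_filter, decide_eq_true_eq, List.mem_map, Finset.mem_toList,
        Finset.mem_univ, true_and]
      constructor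
      · rintro ⟨hx, hD⟩
        have hxl := length_of_mem_wins hx
        have hx0 : x ≠ [] := by rintro rfl; simp at hxl
        obtain ⟨a, ha⟩ := (Dmap_eq_iff_exists hγ hx0 w).1 hD
        exact ⟨a, ha.symm⟩
      · rintro ⟨a, rfl⟩
        have hil := length_integ (β : ZMod q)⁻¹ a w
        have hx0 : integ (β : ZMod q)⁻¹ a w ≠ [] := by
          intro h
          rw [h] at hil
          simp at hil
        have hD := (Dmap_eq_iff_exists hγ hx0 w).2 ⟨a, rfl⟩
        refine ⟨?_, hD⟩
        rw [hI.mem_wins hq hm hd hh (by omega)]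
        intro c _ hc
        rw [hc, Dmap_replicate] at hD
        exact h0 hD.symm
  · rw [List.prefix_iff_eq_take, List.length_replicate, take_Dmap]
    have h1 := List.prefix_iff_eq_take.1 hI.start
    rw [List.length_replicate] at h1
    rw [← h1, Dmap_replicate]
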